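/- arXiv:2207.05694 — 2 statements merged into one kernel-verified Lean document; each statement's English description precedes it below -/
import Mathlib

section
/- Let y be a probability vector of dimension d with strictly positive entries sorted in nonincreasing order y_0 ≥ y_1 ≥ … ≥ y_{d−1}. There exist a probability vector x of dimension d with ¬(x ≺ y) and a probability vector c (of some finite dimension) such that x⊗c ≺ y⊗c, if and only if there exist indices l, m with 0 < l < m < d−1 such that y_0 ≠ y_l and y_m ≠ y_{d−1}. -/
/-!
Write `h_x(t) = ∑ i, (x i - t)⁺`. For nonnegative vectors of equal sum, `x ≺ y` means `h_x ≤ h_y`.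
Since `h_{x ⊗ c}(t) = ∑ j, c j * h_x(t / c j)`, a catalyst averages the gap `h_y - h_x` over
different scales.

If `x` is catalytically majorized by `y`, the scales of the largest and of the smallest positive
entry of `c` show that the entries of `x` lie between the extreme entries of `y`. When at most one
entry of `y` lies strictly between them, this already forces `x ≺ y`.

Conversely, two strictly intermediate entries allow splitting `y` into a block of large and a block
of small entries, both of whose averages lie strictly inside the range of `y`. Average `y` over each
block and move a tiny mass `δ` to the upper block: the result `x` is not majorized by `y`, but
`h_y - h_x ≥ -δ` everywhere, while the gap is nonnegative outside the range of `x` and bounded away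
from `0` just outside it. Along a geometric catalyst, the scales cannot jump over these two strips,
so one positive term compensates all the negative ones.
-/

/-- The sum of the `k` largest entries of a vector (equivalently, for vectors with
nonnegative entries, the maximum of `∑ i ∈ s, x i` over subsets `s` of cardinality at
most `k`; this also accounts for padding with zeros). -/
noncomputable def topSum {ι : Type*} [Fintype ι] [DecidableEq ι] (x : ι → ℝ) (k : ℕ) : ℝ :=
  ((Finset.univ : Finset ι).powerset.filter (fun s => s.card ≤ k)).sup'
    ⟨∅, by simp⟩ (fun s => ∑ i ∈ s, x i)

/-- A probability vector: nonnegative entries summing to 1. -/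
def IsProbVec {ι : Type*} [Fintype ι] (x : ι → ℝ) : Prop :=
  (∀ i, 0 ≤ x i) ∧ ∑ i, x i = 1

/-- `x ≺ y` (majorization, after padding with zeros to a common dimension): every partial
sum of the `k` largest entries of `x` is at most that of `y`, with equal total sums. -/
def PMaj {ι κ : Type*} [Fintype ι] [DecidableEq ι] [Fintype κ] [DecidableEq κ]
    (x : ι → ℝ) (y : κ → ℝ) : Prop :=
  (∀ k : ℕ, topSum x k ≤ topSum y k) ∧ (∑ i, x i = ∑ j, y j)

/-- Tensor product of two vectors: `(x ⊗ y)_{(i,j)} = x_i y_j`. -/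
def pvTensor {ι κ : Type*} (x : ι → ℝ) (y : κ → ℝ) : ι × κ → ℝ :=
  fun p => x p.1 * y p.2

open Finset Topology

lemma exists_finset_card_eq_forall_notMem_le {ι α : Type*} [Fintype ι] [LinearOrder α]
    (x : ι → α) {k : ℕ} (hk : k ≤ Fintype.card ι) :
    ∃ s : Finset ι, #s = k ∧ ∀ i ∈ s, ∀ j ∉ s, x j ≤ x i := by
  classical
  induction k with
  | zero => exact ⟨∅, by simp⟩
  | succ k ih =>
    obtain ⟨s, hs, hle⟩ := ih (by omega)
    have hne : sᶜ.Nonempty := by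
      rw [← card_pos, card_compl]
      omega
    obtain ⟨a, ha, hmax⟩ := exists_max_image sᶜ x hne
    rw [mem_compl] at ha
    refine ⟨insert a s, by rw [card_insert_of_notMem ha, hs], fun i hi j hj => ?_⟩
    rw [mem_insert, not_or] at hj
    rcases mem_insert.1 hi with rfl | hi
    · exact hmax j (mem_compl.2 hj.2)
    · exact hle i hi j hj.2

section TopSum

variable {ι κ : Type*} [Fintype ι] [DecidableEq ι] [Fintype κ] [DecidableEq κ]

lemma sum_le_topSum (x : ι → ℝ) {k : ℕ} {s : Finset ι} (hs : #s ≤ k) :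
    ∑ i ∈ s, x i ≤ topSum x k :=
  le_sup' (fun s => ∑ i ∈ s, x i) (by simpa using hs)

lemma topSum_le {x : ι → ℝ} {k : ℕ} {B : ℝ} (h : ∀ s : Finset ι, #s ≤ k → ∑ i ∈ s, x i ≤ B) :
    topSum x k ≤ B :=
  sup'_le _ _ fun s hs => h s (by simpa using hs)

lemma pmaj_of_forall_exists_card_eq {x : ι → ℝ} {y : κ → ℝ} (hsum : ∑ i, x i = ∑ j, y j)
    (h : ∀ s : Finset ι, ∃ t : Finset κ, #t = #s ∧ ∑ i ∈ s, x i ≤ ∑ j ∈ t, y j) : PMaj x y := by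
  refine ⟨fun k => topSum_le fun s hs => ?_, hsum⟩
  obtain ⟨t, ht, hst⟩ := h s
  exact hst.trans (sum_le_topSum y (ht.trans_le hs))

end TopSum

section Hinge

variable {ι κ : Type*} [Fintype ι] [Fintype κ]

/-- The hinge function of a vector: the total excess of its entries over a threshold `t`. For
nonnegative `x`, `topSum x k` is the minimum of `k * t + hinge x t` over `t ≥ 0`, which turns
majorization into a pointwise inequality of hinge functions. -/
noncomputable def hinge (x : ι → ℝ) (t : ℝ) : ℝ := ∑ i, (x i - t)⁺

lemma hinge_nonneg (x : ι → ℝ) (t : ℝ) : 0 ≤ hinge x t :=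
  sum_nonneg fun _ _ => posPart_nonneg _

lemma sum_sub_le_hinge (x : ι → ℝ) (t : ℝ) (s : Finset ι) : ∑ i ∈ s, (x i - t) ≤ hinge x t :=
  (sum_le_sum fun _ _ => le_posPart _).trans
    (sum_le_sum_of_subset_of_nonneg (subset_univ s) fun _ _ _ => posPart_nonneg _)

lemma sub_le_hinge (x : ι → ℝ) (t : ℝ) (i : ι) : x i - t ≤ hinge x t := by
  simpa using sum_sub_le_hinge x t {i}

lemma sum_sub_add_sub_le_hinge (x : ι → ℝ) (t : ℝ) (i : ι) :
    ∑ j, (x j - t) + (t - x i) ≤ hinge x t := by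
  classical
  have h := sum_sub_le_hinge x t (univ.erase i)
  rw [sum_erase_eq_sub (mem_univ i)] at h
  linarith

lemma hinge_eq_sum_sub {x : ι → ℝ} {t : ℝ} {s : Finset ι} (hs : ∀ i ∈ s, t ≤ x i)
    (hs' : ∀ i ∉ s, x i ≤ t) : hinge x t = ∑ i ∈ s, (x i - t) := by
  rw [hinge, ← sum_subset (subset_univ s) fun i _ hi => posPart_of_nonpos (sub_nonpos.2 (hs' i hi))]
  exact sum_congr rfl fun i hi => posPart_of_nonneg (sub_nonneg.2 (hs i hi))

lemma hinge_eq_zero {x : ι → ℝ} {t : ℝ} (h : ∀ i, x i ≤ t) : hinge x t = 0 := by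
  simpa using hinge_eq_sum_sub (s := ∅) (by simp) fun i _ => h i

lemma hinge_eq_sum_univ_sub {x : ι → ℝ} {t : ℝ} (h : ∀ i, t ≤ x i) :
    hinge x t = ∑ i, (x i - t) :=
  hinge_eq_sum_sub (fun i _ => h i) (by simp)

lemma hinge_eq_sum_univ_sub_of_sum_eq {x y : ι → ℝ} (hsum : ∑ i, x i = ∑ i, y i) {t : ℝ}
    (h : ∀ i, t ≤ x i) : hinge x t = ∑ i, (y i - t) := by
  rw [hinge_eq_sum_univ_sub h, sum_sub_distrib, hsum, ← sum_sub_distrib]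

variable [DecidableEq ι] [DecidableEq κ]

lemma topSum_le_mul_add_hinge (x : ι → ℝ) {t : ℝ} (ht : 0 ≤ t) (k : ℕ) :
    topSum x k ≤ k * t + hinge x t := by
  refine topSum_le fun s hs => ?_
  have hsum := sum_sub_le_hinge x t s
  rw [sum_sub_distrib, sum_const, nsmul_eq_mul] at hsum
  have hcard : (#s : ℝ) * t ≤ k * t := by gcongr
  linarith

lemma exists_mul_add_hinge_le_topSum {x : ι → ℝ} (hx : ∀ i, 0 ≤ x i) (k : ℕ) :
    ∃ t, 0 ≤ t ∧ k * t + hinge x t ≤ topSum x k := by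
  rcases lt_or_ge k (Fintype.card ι) with hk | hk
  · obtain ⟨s, hs, hle⟩ := exists_finset_card_eq_forall_notMem_le x hk.le
    have hne : sᶜ.Nonempty := by
      rw [← card_pos, card_compl]
      omega
    obtain ⟨a, ha, hmax⟩ := exists_max_image sᶜ x hne
    refine ⟨x a, hx a, ?_⟩
    rw [hinge_eq_sum_sub (fun i hi => hle i hi a (mem_compl.1 ha))
      (fun i hi => hmax i (mem_compl.2 hi)), sum_sub_distrib, sum_const, nsmul_eq_mul, hs]
    linarith [sum_le_topSum x hs.le]
  · refine ⟨0, le_rfl, ?_⟩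
    simpa [hinge_eq_sum_univ_sub hx] using sum_le_topSum x (s := univ) hk

lemma PMaj.hinge_le {x : ι → ℝ} {y : κ → ℝ} (h : PMaj x y) {t : ℝ} (ht : 0 ≤ t) :
    hinge x t ≤ hinge y t := by
  set s : Finset ι := {i | t ≤ x i} with hs
  have hx : hinge x t = ∑ i ∈ s, x i - #s * t := by
    rw [hinge_eq_sum_sub (s := s) (fun i hi => by simpa [hs] using hi)
      (fun i hi => (by simpa [hs] using hi : x i < t).le), sum_sub_distrib, sum_const, nsmul_eq_mul]
  linarith [sum_le_topSum x (s := s) le_rfl, h.1 #s, topSum_le_mul_add_hinge y ht #s]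

lemma pmaj_iff_hinge_le {x : ι → ℝ} {y : κ → ℝ} (hy : ∀ j, 0 ≤ y j) :
    PMaj x y ↔ (∀ t, 0 ≤ t → hinge x t ≤ hinge y t) ∧ ∑ i, x i = ∑ j, y j := by
  refine ⟨fun h => ⟨fun t => h.hinge_le, h.2⟩, fun ⟨hle, hsum⟩ => ⟨fun k => ?_, hsum⟩⟩
  obtain ⟨t, ht, htop⟩ := exists_mul_add_hinge_le_topSum hy k
  linarith [topSum_le_mul_add_hinge x ht k, hle t ht]

lemma not_pmaj_of_sum_lt_sum {x y : ι → ℝ} {s : Finset ι} {t : ℝ} (ht : 0 ≤ t)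
    (hs : ∀ i ∈ s, t ≤ y i) (hs' : ∀ i ∉ s, y i ≤ t) (hlt : ∑ i ∈ s, y i < ∑ i ∈ s, x i) :
    ¬ PMaj x y := by
  intro h
  have hle := (sum_sub_le_hinge x t s).trans (h.hinge_le ht)
  rw [hinge_eq_sum_sub hs hs', sum_sub_distrib, sum_sub_distrib] at hle
  linarith

end Hinge

section Tensor

variable {ι κ : Type*} [Fintype ι] [Fintype κ]

lemma sum_pvTensor (x : ι → ℝ) (c : κ → ℝ) :
    ∑ p, pvTensor x c p = (∑ i, x i) * ∑ j, c j := by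
  simp only [pvTensor, sum_mul_sum, Fintype.sum_prod_type]

lemma hinge_pvTensor (x : ι → ℝ) {c : κ → ℝ} (hc : ∀ j, 0 ≤ c j) {t : ℝ} (ht : 0 ≤ t) :
    hinge (pvTensor x c) t = ∑ j, c j * hinge x (t / c j) := by
  simp only [hinge, pvTensor, Fintype.sum_prod_type_right, mul_sum]
  refine sum_congr rfl fun j _ => sum_congr rfl fun i _ => ?_
  rcases (hc j).eq_or_lt with hj | hj
  · simp [← hj, ht]
  · rw [posPart_def, posPart_def, mul_max_of_nonneg _ _ hj.le, mul_zero, mul_sub,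
      mul_div_cancel₀ _ hj.ne', mul_comm]

variable [DecidableEq ι] [DecidableEq κ]

lemma pmaj_pvTensor_iff {x y : ι → ℝ} (hy : ∀ i, 0 ≤ y i) {c : κ → ℝ} (hc : IsProbVec c) :
    PMaj (pvTensor x c) (pvTensor y c) ↔
      (∀ t, 0 ≤ t → ∑ j, c j * hinge x (t / c j) ≤ ∑ j, c j * hinge y (t / c j)) ∧
        ∑ i, x i = ∑ i, y i := by
  have hyc : ∀ p, 0 ≤ pvTensor y c p := fun p => mul_nonneg (hy p.1) (hc.1 p.2)
  rw [pmaj_iff_hinge_le hyc]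
  refine and_congr (forall₂_congr fun t ht => ?_) ?_
  · rw [hinge_pvTensor x hc.1 ht, hinge_pvTensor y hc.1 ht]
  · rw [sum_pvTensor, sum_pvTensor, hc.2, mul_one, mul_one]

lemma hinge_le_hinge_of_pmaj_pvTensor {x y : ι → ℝ} (hy : ∀ i, 0 ≤ y i) {c : κ → ℝ}
    (hc : IsProbVec c) (h : PMaj (pvTensor x c) (pvTensor y c)) {u : ℝ} (hu : 0 ≤ u) {j₀ : κ}
    (hj₀ : 0 < c j₀)
    (hle : ∀ j, 0 < c j → hinge y (u * c j₀ / c j) ≤ hinge x (u * c j₀ / c j)) :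
    hinge x u ≤ hinge y u := by
  by_contra! hlt
  -- At `t = u * c j₀` the scale `j₀` compares the hinge functions at `u` itself.
  refine (((pmaj_pvTensor_iff hy hc).1 h).1 (u * c j₀) (by positivity)).not_gt
    (sum_lt_sum (fun j _ => ?_) ⟨j₀, mem_univ j₀, ?_⟩)
  · rcases (hc.1 j).eq_or_lt with hj | hj
    · simp [← hj]
    · exact mul_le_mul_of_nonneg_left (hle j hj) hj.le
  · rw [mul_div_cancel_right₀ _ hj₀.ne']
    exact mul_lt_mul_of_pos_left hlt hj₀

end Tensor

lemma IsProbVec.exists_pos {ι : Type*} [Fintype ι] {c : ι → ℝ} (hc : IsProbVec c) :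
    ∃ i, 0 < c i := by
  obtain ⟨i, -, hi⟩ := exists_lt_of_sum_lt (s := univ) (f := fun _ => (0 : ℝ)) (g := c)
    (by simp [hc.2])
  exact ⟨i, hi⟩

section Trumping

variable {ι : Type*} [Fintype ι] [DecidableEq ι] {x y : ι → ℝ}

/-- Catalytic majorization, also known as trumping and written `x ≺_T y`: some probability
vector `c` satisfies `x ⊗ c ≺ y ⊗ c`. Catalysts are indexed by `Fin k`. -/
def Trumped (x y : ι → ℝ) : Prop :=
  ∃ (k : ℕ) (c : Fin k → ℝ), IsProbVec c ∧ PMaj (pvTensor x c) (pvTensor y c)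

namespace Trumped

lemma le_of_forall_le (h : Trumped x y) (hy : ∀ i, 0 ≤ y i) {M : ℝ} (hM : ∀ i, y i ≤ M)
    (i : ι) : x i ≤ M := by
  obtain ⟨k, c, hc, hmaj⟩ := h
  have hM₀ : 0 ≤ M := (hy i).trans (hM i)
  obtain ⟨j₁, hj₁⟩ := hc.exists_pos
  have : Nonempty (Fin k) := ⟨j₁⟩
  obtain ⟨j₀, hmax⟩ := Finite.exists_max c
  have hle : hinge x M ≤ hinge y M := by
    refine hinge_le_hinge_of_pmaj_pvTensor hy hc hmaj hM₀ (hj₁.trans_le (hmax j₁)) fun j hj => ?_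
    have hscale : M ≤ M * c j₀ / c j := by
      rw [le_div_iff₀ hj]
      exact mul_le_mul_of_nonneg_left (hmax j) hM₀
    rw [hinge_eq_zero fun i => (hM i).trans hscale]
    exact hinge_nonneg x _
  linarith [sub_le_hinge x M i, hinge_eq_zero hM]

lemma ge_of_forall_ge (h : Trumped x y) {m : ℝ} (hm₀ : 0 ≤ m) (hm : ∀ i, m ≤ y i) (i : ι) :
    m ≤ x i := by
  have hy : ∀ i, 0 ≤ y i := fun i => hm₀.trans (hm i)
  obtain ⟨k, c, hc, hmaj⟩ := h
  have hsum : ∑ i, y i = ∑ i, x i := ((pmaj_pvTensor_iff hy hc).1 hmaj).2.symm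
  obtain ⟨j₁, hj₁⟩ := hc.exists_pos
  obtain ⟨j₀, hj₀, hmin⟩ := exists_min_image {j | 0 < c j} c ⟨j₁, by simpa using hj₁⟩
  simp only [mem_filter_univ] at hj₀ hmin
  have hle : hinge x m ≤ hinge y m := by
    refine hinge_le_hinge_of_pmaj_pvTensor hy hc hmaj hm₀ hj₀ fun j hj => ?_
    have hscale : m * c j₀ / c j ≤ m := by
      rw [div_le_iff₀ hj]
      exact mul_le_mul_of_nonneg_left (hmin j hj) hm₀
    rw [hinge_eq_sum_univ_sub_of_sum_eq hsum fun i => hscale.trans (hm i)]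
    exact sum_sub_le_hinge x _ univ
  linarith [sum_sub_add_sub_le_hinge x m i, hinge_eq_sum_univ_sub_of_sum_eq hsum hm]

lemma of_weights {k : ℕ} {w : Fin k → ℝ} (hw : ∀ j, 0 ≤ w j) (hw' : 0 < ∑ j, w j)
    (hy : ∀ i, 0 ≤ y i) (hsum : ∑ i, x i = ∑ i, y i)
    (h : ∀ t, 0 ≤ t → ∑ j, w j * hinge x (t / w j) ≤ ∑ j, w j * hinge y (t / w j)) :
    Trumped x y := by
  set S := ∑ j, w j with hS
  have hc : IsProbVec fun j => w j / S :=
    ⟨fun j => div_nonneg (hw j) hw'.le, by rw [← sum_div, ← hS, div_self hw'.ne']⟩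
  refine ⟨k, fun j => w j / S, hc, (pmaj_pvTensor_iff hy hc).2 ⟨fun t ht => ?_, hsum⟩⟩
  simp only [div_div_eq_mul_div, div_mul_eq_mul_div, ← sum_div]
  exact div_le_div_of_nonneg_right (h (t * S) (by positivity)) hw'.le

end Trumped

end Trumping

section Intermediate

/-- The indices at which a vector is strictly between two of its other entries, i.e. attains
neither its minimum nor its maximum. -/
def intermediateIndices {ι α : Type*} [LT α] (y : ι → α) : Set ι :=
  {i | (∃ j, y j < y i) ∧ ∃ j, y i < y j}

lemma pmaj_of_subsingleton_intermediateIndices {ι : Type*} [Fintype ι] [DecidableEq ι]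
    {x y : ι → ℝ} (hy : (intermediateIndices y).Subsingleton) (hsum : ∑ i, x i = ∑ i, y i)
    {i₀ i₁ : ι} (hmin : ∀ i, y i₁ ≤ y i) (hmax : ∀ i, y i ≤ y i₀)
    (hx : ∀ i, y i₁ ≤ x i) (hx' : ∀ i, x i ≤ y i₀) : PMaj x y := by
  refine pmaj_of_forall_exists_card_eq hsum fun s => ?_
  obtain ⟨t, ht, hle⟩ := exists_finset_card_eq_forall_notMem_le y s.card_le_univ
  refine ⟨t, ht, ?_⟩
  have hsplit : (∀ i ∈ t, y i = y i₀) ∨ ∀ i ∈ tᶜ, y i = y i₁ := by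
    by_contra! ⟨⟨l, hl, hl₀⟩, m, hm, hm₁⟩
    rw [mem_compl] at hm
    have hl' : y l < y i₀ := (hmax l).lt_of_ne hl₀
    have hm' : y i₁ < y m := (hmin m).lt_of_ne' hm₁
    have hml : y m ≤ y l := hle l hl m hm
    exact hm (hy ⟨⟨i₁, hm'⟩, i₀, hml.trans_lt hl'⟩ ⟨⟨i₁, hm'.trans_le hml⟩, i₀, hl'⟩ ▸ hl)
  rcases hsplit with ht₀ | ht₁
  · rw [sum_eq_card_nsmul ht₀, ht]
    exact sum_le_card_nsmul s x _ fun i _ => hx' i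
  · have hcompl : ∑ i ∈ tᶜ, y i ≤ ∑ i ∈ sᶜ, x i := by
      rw [sum_eq_card_nsmul ht₁, card_compl, ht, ← card_compl]
      exact card_nsmul_le_sum sᶜ x _ fun i _ => hx i
    linarith [sum_add_sum_compl s x, sum_add_sum_compl t y]

lemma nontrivial_intermediateIndices_iff_of_antitone {α : Type*} [PartialOrder α] {d : ℕ}
    (hd : 0 < d) {y : Fin d → α} (hy : Antitone y) :
    (intermediateIndices y).Nontrivial ↔
      ∃ l m : Fin d, 0 < (l : ℕ) ∧ (l : ℕ) < (m : ℕ) ∧ (m : ℕ) < d - 1 ∧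
        y ⟨0, hd⟩ ≠ y l ∧ y m ≠ y ⟨d - 1, Nat.sub_lt hd Nat.one_pos⟩ := by
  have hfirst : ∀ i, y i ≤ y ⟨0, hd⟩ := fun i => hy (Fin.mk_le_of_le_val (Nat.zero_le _))
  have hlast : ∀ i, y ⟨d - 1, Nat.sub_lt hd Nat.one_pos⟩ ≤ y i := fun i =>
    hy (Fin.le_def.2 (Nat.le_sub_one_of_lt i.2))
  constructor
  · intro h
    obtain ⟨l, ⟨-, a, ha⟩, m, ⟨⟨b, hb⟩, -⟩, hlm⟩ := h.exists_lt
    have hl : y l < y ⟨0, hd⟩ := ha.trans_le (hfirst a)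
    have hm : y ⟨d - 1, Nat.sub_lt hd Nat.one_pos⟩ < y m := (hlast b).trans_lt hb
    exact ⟨l, m, hy.reflect_lt hl, hlm, hy.reflect_lt hm, hl.ne', hm.ne'⟩
  · rintro ⟨l, m, -, hlm, -, hl, hm⟩
    have hl' : y l < y ⟨0, hd⟩ := (hfirst l).lt_of_ne' hl
    have hm' : y ⟨d - 1, Nat.sub_lt hd Nat.one_pos⟩ < y m := (hlast m).lt_of_ne' hm
    have hml : y m ≤ y l := hy hlm.le
    exact ⟨l, ⟨⟨_, hm'.trans_le hml⟩, _, hl'⟩, m, ⟨⟨_, hm'⟩, _, hml.trans_lt hl'⟩,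
      Fin.ne_of_lt hlm⟩

end Intermediate

section Geometric

open Set

lemma exists_div_pow_mem_Icc_union_Icc {a b r T : ℝ} {N j : ℕ} (ha : 0 < a) (hr : 1 < r)
    (hN : b ≤ a * r ^ N) (hj : j ≤ N) (hT : T / r ^ j ∈ Ioo a b) :
    ∃ i ≤ N, T / r ^ i ∈ Icc (a / r) a ∪ Icc b (b * r) := by
  have hr₀ : 0 < r := one_pos.trans hr
  have hb : 0 < b := ha.trans (hT.1.trans hT.2)
  have haT : a * r ^ j < T := (lt_div_iff₀ (by positivity)).1 hT.1
  have hTb : T < b * r ^ j := (div_lt_iff₀ (by positivity)).1 hT.2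
  rcases le_or_gt b T with hbT | hbT
  · obtain ⟨n, hn, hn'⟩ := exists_nat_pow_near ((one_le_div hb).2 hbT) hr
    rw [le_div_iff₀ hb] at hn
    rw [div_lt_iff₀ hb, pow_succ] at hn'
    have hnj : n < j := (pow_lt_pow_iff_right₀ hr).1 (by nlinarith)
    refine ⟨n, hnj.le.trans hj, Or.inr ⟨?_, ?_⟩⟩
    · rw [le_div_iff₀ (by positivity)]
      linarith
    · rw [div_le_iff₀ (by positivity)]
      linarith
  · have haT' : a ≤ T := (le_mul_of_one_le_right ha.le (one_le_pow₀ hr.le)).trans haT.le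
    obtain ⟨n, hn, hn'⟩ := exists_nat_pow_near ((one_le_div ha).2 haT') hr
    rw [le_div_iff₀ ha] at hn
    rw [div_lt_iff₀ ha] at hn'
    have hnN : n < N := (pow_lt_pow_iff_right₀ hr).1 (by nlinarith)
    refine ⟨n + 1, hnN, Or.inl ⟨?_, ?_⟩⟩
    · rw [div_le_div_iff₀ hr₀ (by positivity), pow_succ]
      nlinarith
    · rw [div_le_iff₀ (by positivity)]
      linarith

lemma sum_nonneg_of_neg_le_of_card_mul_le {κ : Type*} [Fintype κ] {f : κ → ℝ} {ε : ℝ}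
    (hε : 0 ≤ ε) (hf : ∀ j, -ε ≤ f j) {j₀ : κ} (hj₀ : Fintype.card κ * ε ≤ f j₀) :
    0 ≤ ∑ j, f j := by
  have hsingle : f j₀ + ε ≤ ∑ j, (f j + ε) :=
    single_le_sum (f := fun j => f j + ε) (fun j _ => by linarith [hf j]) (mem_univ j₀)
  rw [sum_add_distrib, sum_const, card_univ, nsmul_eq_mul] at hsingle
  linarith

lemma sum_pow_mul_comp_div_pow_nonneg {g : ℝ → ℝ} {a b r η δ : ℝ} {N : ℕ} (ha : 0 < a)
    (hr : 1 < r) (hN : b ≤ a * r ^ N) (hnonneg : ∀ u ∉ Ioo a b, 0 ≤ g u)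
    (hη : ∀ u ∈ Icc (a / r) a ∪ Icc b (b * r), η ≤ g u) (hδ₀ : 0 ≤ δ) (hδ : ∀ u, -δ ≤ g u)
    (hδη : (N + 1) * (r ^ N * δ) ≤ η) (T : ℝ) :
    0 ≤ ∑ j : Fin (N + 1), r ^ (j : ℕ) * g (T / r ^ (j : ℕ)) := by
  have : 0 < r := one_pos.trans hr
  by_cases hwindow : ∃ j : Fin (N + 1), T / r ^ (j : ℕ) ∈ Ioo a b
  · obtain ⟨j, hj⟩ := hwindow
    obtain ⟨i, hi, hmem⟩ := exists_div_pow_mem_Icc_union_Icc ha hr hN j.is_le hj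
    have hη₀ : 0 ≤ η := le_trans (by positivity) hδη
    refine sum_nonneg_of_neg_le_of_card_mul_le (ε := r ^ N * δ) (by positivity) (fun j => ?_)
      (j₀ := ⟨i, Nat.lt_succ_of_le hi⟩) ?_
    · calc -(r ^ N * δ) ≤ -(r ^ (j : ℕ) * δ) := by
            gcongr
            exacts [hr.le, j.is_le]
        _ = r ^ (j : ℕ) * -δ := (mul_neg _ _).symm
        _ ≤ r ^ (j : ℕ) * g (T / r ^ (j : ℕ)) := by
            gcongr
            exact hδ _
    · calc (Fintype.card (Fin (N + 1)) : ℝ) * (r ^ N * δ) ≤ η := by simpa using hδη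
        _ ≤ g (T / r ^ i) := hη _ hmem
        _ ≤ r ^ i * g (T / r ^ i) :=
            le_mul_of_one_le_left (hη₀.trans (hη _ hmem)) (one_le_pow₀ hr.le)
  · push Not at hwindow
    exact sum_nonneg fun j _ => mul_nonneg (by positivity) (hnonneg _ (hwindow j))

variable {ι : Type*} [Fintype ι] [DecidableEq ι] {y : ι → ℝ}

lemma trumped_of_hinge_le_hinge_add {x : ι → ℝ} (hy : ∀ i, 0 ≤ y i)
    (hsum : ∑ i, x i = ∑ i, y i) {a b r η δ : ℝ} {N : ℕ} {i₀ i₁ : ι} (ha : 0 < a) (hr : 1 < r)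
    (hN : b ≤ a * r ^ N) (hx : ∀ i, x i ∈ Icc a b) (hi₁ : y i₁ + η ≤ a / r)
    (hi₀ : b * r + η ≤ y i₀) (hδ₀ : 0 ≤ δ) (hδ : ∀ u, hinge x u ≤ hinge y u + δ)
    (hδη : (N + 1) * (r ^ N * δ) ≤ η) : Trumped x y := by
  have hlow : ∀ u ≤ a, hinge x u = ∑ i, (y i - u) := fun u hu =>
    hinge_eq_sum_univ_sub_of_sum_eq hsum fun i => hu.trans (hx i).1
  have hhigh : ∀ u, b ≤ u → hinge x u = 0 := fun u hu =>
    hinge_eq_zero fun i => (hx i).2.trans hu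
  have hgap : ∀ u ∉ Ioo a b, 0 ≤ hinge y u - hinge x u := by
    intro u hu
    rcases le_or_gt u a with hua | hua
    · rw [hlow u hua]
      exact sub_nonneg.2 (sum_sub_le_hinge y u univ)
    · rw [hhigh u (not_lt.1 fun hub => hu ⟨hua, hub⟩), sub_zero]
      exact hinge_nonneg y u
  have hstrips : ∀ u ∈ Icc (a / r) a ∪ Icc b (b * r), η ≤ hinge y u - hinge x u := by
    rintro u (⟨hau, hua⟩ | ⟨hbu, hub⟩)
    · rw [hlow u hua]
      linarith [sum_sub_add_sub_le_hinge y u i₁]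
    · rw [hhigh u hbu]
      linarith [sub_le_hinge y u i₀]
  have : 0 < r := one_pos.trans hr
  refine Trumped.of_weights (w := fun j : Fin (N + 1) => r ^ (j : ℕ)) (fun j => by positivity)
    (sum_pos (fun j _ => by positivity) univ_nonempty) hy hsum fun t _ => ?_
  rw [← sub_nonneg, ← sum_sub_distrib]
  simpa only [mul_sub] using sum_pow_mul_comp_div_pow_nonneg ha hr hN hgap hstrips hδ₀
    (fun u => by linarith [hδ u]) hδη t

lemma exists_pos_forall_trumped_of_mem_Icc (hy : ∀ i, 0 ≤ y i) {a b : ℝ} {i₀ i₁ : ι}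
    (ha : y i₁ < a) (hb : b < y i₀) :
    ∃ ε > 0, ∀ x : ι → ℝ, ∑ i, x i = ∑ i, y i → (∀ i, x i ∈ Icc a b) →
      (∀ u, hinge x u ≤ hinge y u + ε) → Trumped x y := by
  have ha₀ : 0 < a := (hy i₁).trans_lt ha
  have hra : ∀ᶠ r in 𝓝[>] (1 : ℝ), y i₁ < a / r := by
    have : ContinuousAt (fun r : ℝ => a / r) 1 := continuousAt_const.div continuousAt_id one_ne_zero
    exact (this.eventually_const_lt (by simpa using ha)).filter_mono nhdsWithin_le_nhds
  have hrb : ∀ᶠ r in 𝓝[>] (1 : ℝ), b * r < y i₀ := by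
    have : ContinuousAt (fun r : ℝ => b * r) 1 := by fun_prop
    exact (this.eventually_lt_const (by simpa using hb)).filter_mono nhdsWithin_le_nhds
  obtain ⟨r, ⟨hra, hrb⟩, hr⟩ := ((hra.and hrb).and self_mem_nhdsWithin).exists
  obtain ⟨N, hN⟩ := pow_unbounded_of_one_lt (b / a) hr
  rw [div_lt_iff₀' ha₀] at hN
  set η := min (a / r - y i₁) (y i₀ - b * r)
  have : 0 < η := lt_min (sub_pos.2 hra) (sub_pos.2 hrb)
  have hη₁ : η ≤ a / r - y i₁ := min_le_left _ _
  have hη₀ : η ≤ y i₀ - b * r := min_le_right _ _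
  have : 0 < r := one_pos.trans hr
  refine ⟨η / ((N + 1) * r ^ N), by positivity, fun x hsum hx hle => ?_⟩
  refine trumped_of_hinge_le_hinge_add hy hsum ha₀ hr hN.le hx (i₀ := i₀) (i₁ := i₁)
    (η := η) (by linarith) (by linarith) (by positivity) hle ?_
  rw [← mul_assoc, mul_div_cancel₀ _ (by positivity)]

end Geometric

lemma card_mul_posPart_sub_le {ι : Type*} (y : ι → ℝ) (s : Finset ι) {u v e : ℝ}
    (he : 0 ≤ e) (hv : #s * v ≤ ∑ i ∈ s, y i + e) : #s * (v - u)⁺ ≤ ∑ i ∈ s, (y i - u)⁺ + e := by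
  have hnonneg : 0 ≤ ∑ i ∈ s, (y i - u)⁺ := sum_nonneg fun _ _ => posPart_nonneg _
  have hle : ∑ i ∈ s, (y i - u) ≤ ∑ i ∈ s, (y i - u)⁺ := sum_le_sum fun _ _ => le_posPart _
  rw [sum_sub_distrib, sum_const, nsmul_eq_mul] at hle
  rw [posPart_def, mul_max_of_nonneg _ _ (Nat.cast_nonneg _), mul_zero]
  exact max_le (by linarith) (by linarith)

section BlockAverage

variable {ι : Type*} [Fintype ι] [DecidableEq ι]

/-- The vector obtained from `y` by averaging over `A` and over its complement and then moving
a mass `δ` from the complement to `A`; it is the catalyzable state that `y` does not majorize. -/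
noncomputable def blockAverage (y : ι → ℝ) (A : Finset ι) (δ : ℝ) : ι → ℝ :=
  A.piecewise (fun _ => (∑ j ∈ A, y j + δ) / #A) (fun _ => (∑ j ∈ Aᶜ, y j - δ) / #Aᶜ)

lemma sum_blockAverage_left (y : ι → ℝ) {A : Finset ι} (hA : A.Nonempty) (δ : ℝ) :
    ∑ i ∈ A, blockAverage y A δ i = ∑ i ∈ A, y i + δ := by
  have hcard : (#A : ℝ) ≠ 0 := by exact_mod_cast hA.card_pos.ne'
  rw [sum_eq_card_nsmul (b := (∑ j ∈ A, y j + δ) / #A) fun i hi => piecewise_eq_of_mem A _ _ hi,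
    nsmul_eq_mul, mul_div_cancel₀ _ hcard]

lemma sum_comp_blockAverage (y : ι → ℝ) (A : Finset ι) (δ : ℝ) (φ : ℝ → ℝ) :
    ∑ i, φ (blockAverage y A δ i) =
      #A * φ ((∑ j ∈ A, y j + δ) / #A) + #Aᶜ * φ ((∑ j ∈ Aᶜ, y j - δ) / #Aᶜ) := by
  rw [← sum_add_sum_compl A, ← nsmul_eq_mul, ← nsmul_eq_mul]
  congr 1 <;> refine sum_eq_card_nsmul fun i hi => congrArg φ ?_
  · exact piecewise_eq_of_mem A _ _ hi
  · exact piecewise_eq_of_notMem A _ _ (mem_compl.1 hi)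

lemma sum_blockAverage (y : ι → ℝ) {A : Finset ι} (hA : A.Nonempty) (hA' : Aᶜ.Nonempty) (δ : ℝ) :
    ∑ i, blockAverage y A δ i = ∑ i, y i := by
  have hcard : (#A : ℝ) ≠ 0 := by exact_mod_cast hA.card_pos.ne'
  have hcard' : (#Aᶜ : ℝ) ≠ 0 := by exact_mod_cast hA'.card_pos.ne'
  calc ∑ i, blockAverage y A δ i = (∑ i ∈ A, y i + δ) + (∑ i ∈ Aᶜ, y i - δ) := by
        simpa only [id, mul_div_cancel₀ _ hcard, mul_div_cancel₀ _ hcard'] using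
          sum_comp_blockAverage y A δ id
    _ = ∑ i, y i := by
        rw [← sum_add_sum_compl A y]
        ring

lemma hinge_blockAverage_le (y : ι → ℝ) {A : Finset ι} (hA : A.Nonempty) (hA' : Aᶜ.Nonempty)
    {δ : ℝ} (hδ : 0 ≤ δ) (u : ℝ) : hinge (blockAverage y A δ) u ≤ hinge y u + δ := by
  have hcard : (#A : ℝ) ≠ 0 := by exact_mod_cast hA.card_pos.ne'
  have hcard' : (#Aᶜ : ℝ) ≠ 0 := by exact_mod_cast hA'.card_pos.ne'
  have hup := card_mul_posPart_sub_le y A (u := u) hδ (v := (∑ j ∈ A, y j + δ) / #A)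
    (mul_div_cancel₀ _ hcard).le
  have hdown := card_mul_posPart_sub_le y Aᶜ (u := u) le_rfl (v := (∑ j ∈ Aᶜ, y j - δ) / #Aᶜ)
    (by rw [mul_div_cancel₀ _ hcard']; linarith)
  rw [hinge, sum_comp_blockAverage y A δ fun v => (v - u)⁺, hinge, ← sum_add_sum_compl A]
  linarith

lemma eventually_blockAverage_mem_Icc (y : ι → ℝ) {A : Finset ι} {a b : ℝ}
    (hp : (∑ i ∈ A, y i) / #A ∈ Set.Ioo a b) (hq : (∑ i ∈ Aᶜ, y i) / #Aᶜ ∈ Set.Ioo a b) :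
    ∀ᶠ δ in 𝓝 0, ∀ i, blockAverage y A δ i ∈ Set.Icc a b := by
  have hup : ContinuousAt (fun δ => (∑ j ∈ A, y j + δ) / #A) 0 := by fun_prop
  have hdown : ContinuousAt (fun δ => (∑ j ∈ Aᶜ, y j - δ) / #Aᶜ) 0 := by fun_prop
  filter_upwards [hup.eventually_mem (Icc_mem_nhds (by simpa using hp.1) (by simpa using hp.2)),
    hdown.eventually_mem (Icc_mem_nhds (by simpa using hq.1) (by simpa using hq.2))]
    with δ hδ hδ' i
  by_cases hi : i ∈ A
  · simpa only [blockAverage, piecewise_eq_of_mem A _ _ hi] using hδ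
  · simpa only [blockAverage, piecewise_eq_of_notMem A _ _ hi] using hδ'

lemma exists_nontrivial_trumped_of_averages {y : ι → ℝ} (hy : IsProbVec y) {A : Finset ι}
    (hA : A.Nonempty) (hA' : Aᶜ.Nonempty) {t : ℝ} (hAt : ∀ i ∈ A, t ≤ y i)
    (hAt' : ∀ i ∉ A, y i ≤ t) {i₀ i₁ : ι} (hi₀ : (∑ i ∈ A, y i) / #A < y i₀)
    (hi₁ : y i₁ < (∑ i ∈ Aᶜ, y i) / #Aᶜ) :
    ∃ x : ι → ℝ, IsProbVec x ∧ ¬ PMaj x y ∧ Trumped x y := by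
  have htp : t ≤ (∑ i ∈ A, y i) / #A := by
    rw [le_div_iff₀' (by exact_mod_cast hA.card_pos), ← nsmul_eq_mul]
    exact card_nsmul_le_sum _ _ _ hAt
  have hqt : (∑ i ∈ Aᶜ, y i) / #Aᶜ ≤ t := by
    rw [div_le_iff₀' (by exact_mod_cast hA'.card_pos), ← nsmul_eq_mul]
    exact sum_le_card_nsmul _ _ _ fun i hi => hAt' i (mem_compl.1 hi)
  obtain ⟨a, hya, ha⟩ := exists_between hi₁
  obtain ⟨b, hb, hyb⟩ := exists_between hi₀
  have ha₀ : 0 < a := (hy.1 i₁).trans_lt hya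
  obtain ⟨ε, hε, htrumped⟩ := exists_pos_forall_trumped_of_mem_Icc hy.1 hya hyb
  have hqp := hqt.trans htp
  have hsmall : ∀ᶠ δ in 𝓝 0, (∀ i, blockAverage y A δ i ∈ Set.Icc a b) ∧ δ ≤ ε :=
    (eventually_blockAverage_mem_Icc y ⟨ha.trans_le hqp, hb⟩ ⟨ha, hqp.trans_lt hb⟩).and
      (eventually_le_nhds hε)
  obtain ⟨δ, ⟨hmem, hδε⟩, hδ : 0 < δ⟩ :=
    ((hsmall.filter_mono nhdsWithin_le_nhds).and (self_mem_nhdsWithin (s := Set.Ioi 0))).exists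
  have hsum := sum_blockAverage y hA hA' δ
  refine ⟨blockAverage y A δ, ⟨fun i => ha₀.le.trans (hmem i).1, hsum.trans hy.2⟩, ?_, ?_⟩
  · refine not_pmaj_of_sum_lt_sum (ha₀.le.trans (ha.le.trans hqt)) hAt hAt' ?_
    rw [sum_blockAverage_left y hA]
    exact lt_add_of_pos_right _ hδ
  · exact htrumped _ hsum hmem fun u =>
      (hinge_blockAverage_le y hA hA' hδ.le u).trans (by linarith)

lemma exists_nontrivial_trumped_of_intermediate {y : ι → ℝ} (hy : IsProbVec y) {l m : ι}
    (hl : l ∈ intermediateIndices y) (hm : m ∈ intermediateIndices y) (hne : l ≠ m)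
    (hml : y m ≤ y l) : ∃ x : ι → ℝ, IsProbVec x ∧ ¬ PMaj x y ∧ Trumped x y := by
  have : Nonempty ι := ⟨l⟩
  obtain ⟨i₀, hmax⟩ := Finite.exists_max y
  obtain ⟨i₁, hmin⟩ := Finite.exists_min y
  obtain ⟨-, a, ha⟩ := hl
  obtain ⟨⟨b, hb⟩, -⟩ := hm
  set A : Finset ι := ({i | y l ≤ y i} : Finset ι).erase m with hA
  have hlA : l ∈ A := by simp [hA, hne]
  have hmA : m ∈ Aᶜ := by simp [hA]
  refine exists_nontrivial_trumped_of_averages hy (A := A) (t := y l) (i₀ := i₀) (i₁ := i₁)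
    ⟨l, hlA⟩ ⟨m, hmA⟩ (fun i hi => by simpa using mem_of_mem_erase hi) (fun i hi => ?_) ?_ ?_
  · by_contra! hlt
    exact hi (mem_erase.2 ⟨fun him => (him ▸ hlt).not_ge hml, by simpa using hlt.le⟩)
  · rw [div_lt_iff₀' (by exact_mod_cast card_pos.2 ⟨l, hlA⟩), ← nsmul_eq_mul, ← sum_const]
    exact sum_lt_sum (fun i _ => hmax i) ⟨l, hlA, ha.trans_le (hmax a)⟩
  · rw [lt_div_iff₀' (by exact_mod_cast card_pos.2 ⟨m, hmA⟩), ← nsmul_eq_mul, ← sum_const]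
    exact sum_lt_sum (fun i _ => hmin i) ⟨m, hmA, (hmin b).trans_lt hb⟩

end BlockAverage

theorem nontrivial_catalysis_iff_general {ι : Type*} [Fintype ι] [DecidableEq ι] {y : ι → ℝ}
    (hy : IsProbVec y) :
    (∃ x : ι → ℝ, IsProbVec x ∧ ¬ PMaj x y ∧ Trumped x y) ↔
      (intermediateIndices y).Nontrivial := by
  constructor
  · rintro ⟨x, hx, hnot, htr⟩
    by_contra hy'
    have : Nonempty ι := hy.exists_pos.nonempty
    obtain ⟨i₀, hmax⟩ := Finite.exists_max y
    obtain ⟨i₁, hmin⟩ := Finite.exists_min y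
    exact hnot (pmaj_of_subsingleton_intermediateIndices (Set.not_nontrivial_iff.1 hy')
      (hx.2.trans hy.2.symm) hmin hmax (htr.ge_of_forall_ge (hy.1 i₁) hmin)
      (htr.le_of_forall_le hy.1 hmax))
  · rintro ⟨l, hl, m, hm, hne⟩
    rcases le_total (y m) (y l) with hml | hlm
    · exact exists_nontrivial_trumped_of_intermediate hy hl hm hne hml
    · exact exists_nontrivial_trumped_of_intermediate hy hm hl hne.symm hlm

/-- Daftuar–Klimesh characterization of target states admitting nontrivial catalysis:
for a strictly positive, nonincreasingly sorted probability vector `y` of dimension `d`,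
there exist `x` with `¬(x ≺ y)` and a catalyst `c` with `x ⊗ c ≺ y ⊗ c` iff there are
indices `0 < l < m < d - 1` with `y₀ ≠ y_l` and `y_m ≠ y_{d-1}`. -/
theorem nontrivial_catalysis_iff {d : ℕ} (hd : 0 < d) (y : Fin d → ℝ)
    (hy : IsProbVec y) (hyp : ∀ i, 0 < y i) (hya : Antitone y) :
    (∃ x : Fin d → ℝ, IsProbVec x ∧ ¬ PMaj x y ∧
        ∃ (k : ℕ) (c : Fin k → ℝ), IsProbVec c ∧ PMaj (pvTensor x c) (pvTensor y c)) ↔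
      (∃ l m : Fin d, 0 < (l : ℕ) ∧ (l : ℕ) < (m : ℕ) ∧ (m : ℕ) < d - 1 ∧
        y ⟨0, hd⟩ ≠ y l ∧ y m ≠ y ⟨d - 1, Nat.sub_lt hd Nat.one_pos⟩) :=
  (nontrivial_catalysis_iff_general hy).trans
    (nontrivial_intermediateIndices_iff_of_antitone hd hya)
end

section
/- Let x, y be probability vectors of dimension d, sorted in nonincreasing order, with strictly positive entries, and let γ be a probability vector of dimension m, sorted in nonincreasing order, with strictly positive entries. If x⊗γ ≺ y⊗γ, then m·γ_{m−1} ≤ P(x → y), where γ_{m−1} is the smallest entry of γ. -/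
/-- The optimal conversion probability
`P(v → w) = min_{0 ≤ n ≤ D-1} (∑_{i=n}^{D-1} v↓_i) / (∑_{i=n}^{D-1} w↓_i)`,
where the tail sum of the `D - n` smallest entries is the total sum minus the sum of the
`n` largest entries. -/
noncomputable def Pconv {ι : Type*} [Fintype ι] [DecidableEq ι] [Nonempty ι]
    (v w : ι → ℝ) : ℝ :=
  (Finset.range (Fintype.card ι)).inf' (Finset.nonempty_range_iff.mpr Fintype.card_ne_zero)
    (fun n => (∑ i, v i - topSum v n) / (∑ i, w i - topSum w n))

/-!
Tail sums of a vector `y ≥ 0` have the dual description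
`tailSum y n = max_{a ≥ 0} (∑ i, min (y i) a - n * a)`, attained when `a` is the `(n + 1)`-st
largest entry. Repeating every entry of `y` exactly `m` times multiplies the dual objective for `n`
by `m` and turns it into the one for `n * m`, so the tail of the repeated vector after `n * m`
entries is at least `m * tailSum y n`. Since `y ⊗ γ` dominates `γ_min` times the repeated vector,
`m * γ_min * tailSum y n ≤ tailSum (y ⊗ γ) (n * m) ≤ tailSum (x ⊗ γ) (n * m) ≤ tailSum x n`,
the last step because the products of the `n` largest entries of `x` with all entries of `γ` are
only one choice of `n * m` entries of `x ⊗ γ`.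
-/

section TailSum

open Finset

variable {ι κ : Type*} [Fintype ι]

/-- The part of the total sum left over after removing the `k` largest entries. As for `topSum`,
at most `k` entries are removed, so negative entries are never removed. -/
noncomputable def tailSum [DecidableEq ι] (x : ι → ℝ) (k : ℕ) : ℝ :=
  ∑ i, x i - topSum x k

lemma tailSum_le_sum_compl [DecidableEq ι] (x : ι → ℝ) {k : ℕ} {s : Finset ι} (hs : #s ≤ k) :
    tailSum x k ≤ ∑ i ∈ sᶜ, x i := by
  have sum_le_topSum : ∑ i ∈ s, x i ≤ topSum x k :=
    le_sup' (fun t => ∑ i ∈ t, x i) (by simpa using hs)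
  rw [tailSum, ← sum_compl_add_sum s x]
  linarith

lemma exists_tailSum_eq_sum_compl [DecidableEq ι] (x : ι → ℝ) (k : ℕ) :
    ∃ s : Finset ι, #s ≤ k ∧ tailSum x k = ∑ i ∈ sᶜ, x i := by
  obtain ⟨s, hs, hsum⟩ := exists_mem_eq_sup' (s := (univ : Finset ι).powerset.filter (#· ≤ k))
    ⟨∅, by simp⟩ (fun t => ∑ i ∈ t, x i)
  refine ⟨s, (mem_filter.mp hs).2, ?_⟩
  rw [tailSum, topSum, hsum, ← sum_compl_add_sum s x, add_sub_cancel_right]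

lemma tailSum_pos [DecidableEq ι] {x : ι → ℝ} (hx : ∀ i, 0 < x i) {k : ℕ}
    (hk : k < Fintype.card ι) : 0 < tailSum x k := by
  obtain ⟨s, hs, hsum⟩ := exists_tailSum_eq_sum_compl x k
  have compl_nonempty : sᶜ.Nonempty := by
    rw [← card_pos, card_compl]
    omega
  exact hsum ▸ sum_pos (fun i _ => hx i) compl_nonempty

lemma mul_tailSum_le_tailSum [DecidableEq ι] {x y : ι → ℝ} {c : ℝ} (hc : 0 ≤ c)
    (hxy : ∀ i, c * x i ≤ y i) (k : ℕ) : c * tailSum x k ≤ tailSum y k := by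
  obtain ⟨s, hs, hsum⟩ := exists_tailSum_eq_sum_compl y k
  calc c * tailSum x k ≤ c * ∑ i ∈ sᶜ, x i := by gcongr; exact tailSum_le_sum_compl x hs
    _ = ∑ i ∈ sᶜ, c * x i := mul_sum ..
    _ ≤ ∑ i ∈ sᶜ, y i := sum_le_sum fun i _ => hxy i
    _ = tailSum y k := hsum.symm

lemma sum_min_sub_mul_le_tailSum [DecidableEq ι] (x : ι → ℝ) (k : ℕ) {a : ℝ} (ha : 0 ≤ a) :
    ∑ i, min (x i) a - k * a ≤ tailSum x k := by
  obtain ⟨s, hs, hsum⟩ := exists_tailSum_eq_sum_compl x k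
  have sum_compl_le : ∑ i ∈ sᶜ, min (x i) a ≤ ∑ i ∈ sᶜ, x i :=
    sum_le_sum fun i _ => min_le_left _ _
  have sum_le : ∑ i ∈ s, min (x i) a ≤ k * a :=
    calc ∑ i ∈ s, min (x i) a ≤ #s * a := by
          simpa using sum_le_card_nsmul s _ a fun i _ => min_le_right (x i) a
      _ ≤ k * a := by gcongr
  rw [hsum, ← sum_compl_add_sum s]
  linarith

lemma exists_card_eq_forall_mem_le_forall_notMem_le (x : ι → ℝ) {n : ℕ}
    (hn : n < Fintype.card ι) :
    ∃ s : Finset ι, ∃ j ∉ s, #s = n ∧ (∀ i ∈ s, x j ≤ x i) ∧ ∀ i ∉ s, x i ≤ x j := by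
  classical
  induction n with
  | zero =>
    have : Nonempty ι := Fintype.card_pos_iff.mp hn
    obtain ⟨j, hj⟩ := Finite.exists_max x
    exact ⟨∅, j, notMem_empty j, card_empty, by simp, fun i _ => hj i⟩
  | succ n ih =>
    obtain ⟨s, j, hjs, hs, hmem, hnotMem⟩ := ih (by omega)
    have card_insert : #(insert j s) = n + 1 := by rw [card_insert_of_notMem hjs, hs]
    have compl_nonempty : (insert j s)ᶜ.Nonempty := by
      rw [← card_pos, card_compl]
      omega
    obtain ⟨l, hl, hmax⟩ := exists_max_image _ x compl_nonempty
    rw [mem_compl] at hl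
    have le_of_mem : x l ≤ x j := hnotMem l fun hls => hl (mem_insert_of_mem hls)
    exact ⟨insert j s, l, hl, card_insert,
      (forall_mem_insert ..).mpr ⟨le_of_mem, fun i hi => le_of_mem.trans (hmem i hi)⟩,
      fun i hi => hmax i (mem_compl.mpr hi)⟩

lemma exists_tailSum_eq_sum_min_sub_mul [DecidableEq ι] {x : ι → ℝ} (hx : ∀ i, 0 ≤ x i) {n : ℕ}
    (hn : n < Fintype.card ι) :
    ∃ a, 0 ≤ a ∧ tailSum x n = ∑ i, min (x i) a - n * a := by
  obtain ⟨s, j, -, hs, hmem, hnotMem⟩ := exists_card_eq_forall_mem_le_forall_notMem_le x hn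
  refine ⟨x j, hx j, (sum_min_sub_mul_le_tailSum x n (hx j)).antisymm' ?_⟩
  calc tailSum x n ≤ ∑ i ∈ sᶜ, x i := tailSum_le_sum_compl x hs.le
    _ = ∑ i ∈ sᶜ, min (x i) (x j) :=
      sum_congr rfl fun i hi => (min_eq_left (hnotMem i (mem_compl.mp hi))).symm
    _ = ∑ i, min (x i) (x j) - ∑ i ∈ s, min (x i) (x j) := by
      rw [← sum_compl_add_sum s, add_sub_cancel_right]
    _ = ∑ i, min (x i) (x j) - n * x j := by
      rw [sum_congr rfl fun i hi => min_eq_right (hmem i hi), sum_const, hs, nsmul_eq_mul]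

variable [DecidableEq ι] [Fintype κ] [DecidableEq κ]

lemma card_mul_tailSum_le_tailSum_comp_fst {x : ι → ℝ} (hx : ∀ i, 0 ≤ x i) {n : ℕ}
    (hn : n < Fintype.card ι) :
    Fintype.card κ * tailSum x n
      ≤ tailSum (fun p : ι × κ => x p.1) (n * Fintype.card κ) := by
  obtain ⟨a, ha, htail⟩ := exists_tailSum_eq_sum_min_sub_mul hx hn
  calc Fintype.card κ * tailSum x n
      = ∑ p : ι × κ, min (x p.1) a - (n * Fintype.card κ : ℕ) * a := by
        simp only [htail, Fintype.sum_prod_type, sum_const, card_univ, nsmul_eq_mul, ← mul_sum,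
          Nat.cast_mul]
        ring
    _ ≤ _ := sum_min_sub_mul_le_tailSum _ _ ha

lemma tailSum_pvTensor_le_tailSum (x : ι → ℝ) {c : κ → ℝ} (hc : ∑ j, c j = 1) (n : ℕ) :
    tailSum (pvTensor x c) (n * Fintype.card κ) ≤ tailSum x n := by
  obtain ⟨s, hs, hsum⟩ := exists_tailSum_eq_sum_compl x n
  have card_le : #(s ×ˢ (univ : Finset κ)) ≤ n * Fintype.card κ := by
    rw [card_product, card_univ]
    gcongr
  have compl_eq : (s ×ˢ (univ : Finset κ))ᶜ = sᶜ ×ˢ univ := by ext; simp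
  calc tailSum (pvTensor x c) (n * Fintype.card κ)
      ≤ ∑ p ∈ (s ×ˢ (univ : Finset κ))ᶜ, pvTensor x c p := tailSum_le_sum_compl _ card_le
    _ = (∑ i ∈ sᶜ, x i) * ∑ j, c j := by rw [compl_eq, sum_product, sum_mul_sum]; rfl
    _ = tailSum x n := by rw [hc, mul_one, hsum]

lemma PMaj.tailSum_le_tailSum {x : ι → ℝ} {y : κ → ℝ} (h : PMaj x y) (k : ℕ) :
    tailSum y k ≤ tailSum x k :=
  sub_le_sub h.2.ge (h.1 k)

lemma le_Pconv_iff [Nonempty ι] {x y : ι → ℝ} (hy : ∀ i, 0 < y i) {c : ℝ} :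
    c ≤ Pconv x y ↔ ∀ n < Fintype.card ι, c * tailSum y n ≤ tailSum x n := by
  simp only [Pconv, le_inf'_iff, mem_range]
  exact forall₂_congr fun n hn => le_div_iff₀ (tailSum_pos hy hn)

theorem catalyst_smallest_entry_bound_general [Nonempty ι] {x y : ι → ℝ} {γ : κ → ℝ} {j₀ : κ}
    (hy : ∀ i, 0 < y i) (hγ : IsProbVec γ) (hj₀ : ∀ j, γ j₀ ≤ γ j)
    (h : PMaj (pvTensor x γ) (pvTensor y γ)) :
    Fintype.card κ * γ j₀ ≤ Pconv x y := by
  refine (le_Pconv_iff hy).mpr fun n hn => ?_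
  have scaled_le_tensor (p : ι × κ) : γ j₀ * y p.1 ≤ pvTensor y γ p := by
    rw [pvTensor, mul_comm]
    exact mul_le_mul_of_nonneg_left (hj₀ p.2) (hy p.1).le
  calc Fintype.card κ * γ j₀ * tailSum y n
      = γ j₀ * (Fintype.card κ * tailSum y n) := by ring
    _ ≤ γ j₀ * tailSum (fun p : ι × κ => y p.1) (n * Fintype.card κ) :=
      mul_le_mul_of_nonneg_left
        (card_mul_tailSum_le_tailSum_comp_fst (fun i => (hy i).le) hn) (hγ.1 j₀)
    _ ≤ tailSum (pvTensor y γ) (n * Fintype.card κ) :=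
      mul_tailSum_le_tailSum (hγ.1 j₀) scaled_le_tensor _
    _ ≤ tailSum (pvTensor x γ) (n * Fintype.card κ) := h.tailSum_le_tailSum _
    _ ≤ tailSum x n := tailSum_pvTensor_le_tailSum x hγ.2 n

end TailSum

/-- Zhou–Guo structural constraint: if a catalyst `γ` of dimension `m + 1` with smallest
entry `γ_{m}` enables the deterministic transformation `x ⊗ γ ≺ y ⊗ γ`, then
`(m + 1) · γ_m ≤ P(x → y)`. -/
theorem catalyst_smallest_entry_bound {d m : ℕ} (x y : Fin (d + 1) → ℝ)
    (γ : Fin (m + 1) → ℝ)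
    (hx : IsProbVec x) (hy : IsProbVec y) (hxa : Antitone x) (hya : Antitone y)
    (hxp : ∀ i, 0 < x i) (hyp : ∀ i, 0 < y i)
    (hγ : IsProbVec γ) (hγa : Antitone γ) (hγp : ∀ i, 0 < γ i)
    (h : PMaj (pvTensor x γ) (pvTensor y γ)) :
    ((m : ℝ) + 1) * γ (Fin.last m) ≤ Pconv x y := by
  simpa using catalyst_smallest_entry_bound_general hyp hγ (fun j => hγa (Fin.le_last j)) h
end
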